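/- arXiv:2410.15852 — 3 statements merged into one kernel-verified Lean document; each statement's English description precedes it below -/
import Mathlib

section
/- For every integer n > 4, o2(n) + o2(n-3) = pod_{>2}(n). -/
/-- No even part is repeated (all even parts are distinct). -/
def EvenDistinct {n : ℕ} (p : n.Partition) : Prop :=
  ∀ i, Even i → p.parts.count i ≤ 1

/-- No odd part is repeated (all odd parts are distinct). -/
def OddDistinct {n : ℕ} (p : n.Partition) : Prop :=
  ∀ i, Odd i → p.parts.count i ≤ 1

/-- The largest part of a partition (0 for the empty partition of 0). -/
def maxPart {n : ℕ} (p : n.Partition) : ℕ := p.parts.sup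

/-- Number of partitions of n with no odd part repeated and every part > 2. -/
noncomputable def podGtTwo (n : ℕ) : ℕ :=
  Nat.card {p : n.Partition // OddDistinct p ∧ ∀ i ∈ p.parts, 2 < i}

/-- Number of partitions of n with no odd part repeated, largest part even,
and the largest part appearing at least twice. -/
noncomputable def o2 (n : ℕ) : ℕ :=
  Nat.card {p : n.Partition // OddDistinct p ∧ p.parts ≠ 0 ∧ Even (maxPart p) ∧
    2 ≤ p.parts.count (maxPart p)}

/-!
A partition counted by `o2 m` has largest part `2k`, with multiplicity at least two. Its *core* is
`(k, t)`, where `t` consists of the parts larger than `2` that remain after two copies of `2k` are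
removed. The core and `m` determine the partition, because a number is a sum of twos and at most one
`1` in exactly one way. The cores that occur are those of weight `4k + |t|` at most `m`.

A partition counted by `podGtTwo n` is determined by its *tail*: all parts but one copy of the
largest. If the largest part of the tail is `2k`, removing it leaves a core of weight at most `n`.
If it is `2k + 1`, the other parts of the tail are at most `2k` and the largest part of the
partition is at least `2k + 2`, so removing it leaves a core of weight at most `n - 3`. The empty
tail stands in for the core `(1, 0)`.
-/

section MultisetSup

variable {α : Type*} [LinearOrder α] [OrderBot α]

theorem multiset_sup_mem {s : Multiset α} (hs : s ≠ 0) : s.sup ∈ s := by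
  induction s using Multiset.induction_on with
  | empty => exact absurd rfl hs
  | cons a t ih =>
    rw [Multiset.sup_cons]
    rcases eq_or_ne t 0 with rfl | ht
    · simp
    · rcases max_choice a t.sup with h | h <;> simp [h, ih ht]

theorem multiset_sup_cons_of_forall_le {a : α} {s : Multiset α} (h : ∀ i ∈ s, i ≤ a) :
    (a ::ₘ s).sup = a := by
  rw [Multiset.sup_cons, sup_eq_left.2 (Multiset.sup_le.2 h)]

theorem multiset_exists_eq_cons_forall_le {s : Multiset α} (hs : s ≠ 0) :
    ∃ a t, s = a ::ₘ t ∧ ∀ i ∈ t, i ≤ a := by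
  obtain ⟨t, ht⟩ := Multiset.exists_cons_of_mem (multiset_sup_mem hs)
  exact ⟨s.sup, t, ht, fun i hi => Multiset.le_sup (ht ▸ Multiset.mem_cons_of_mem hi)⟩

end MultisetSup

/-- The condition `OddDistinct` on the multiset of parts: no odd number occurs twice. -/
def OddPartsDistinct (s : Multiset ℕ) : Prop :=
  ∀ i, Odd i → s.count i ≤ 1

theorem oddPartsDistinct_zero : OddPartsDistinct 0 := by
  simp [OddPartsDistinct]

theorem oddPartsDistinct_cons {a : ℕ} {s : Multiset ℕ} :
    OddPartsDistinct (a ::ₘ s) ↔ (Odd a → a ∉ s) ∧ OddPartsDistinct s := by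
  constructor
  · refine fun h => ⟨fun ha => ?_, fun i hi => (Multiset.count_le_count_cons i a s).trans (h i hi)⟩
    simpa using h a ha
  · rintro ⟨ha, hs⟩ i hi
    rcases eq_or_ne i a with rfl | hia
    · simp [Multiset.count_eq_zero_of_notMem (ha hi)]
    · simpa [Multiset.count_cons_of_ne hia] using hs i hi

theorem oddPartsDistinct_cons_of_even {a : ℕ} {s : Multiset ℕ} (ha : Even a) :
    OddPartsDistinct (a ::ₘ s) ↔ OddPartsDistinct s := by
  simp [oddPartsDistinct_cons, Nat.not_odd_iff_even.2 ha]

theorem OddPartsDistinct.mono {s t : Multiset ℕ} (ht : OddPartsDistinct t) (h : s ≤ t) :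
    OddPartsDistinct s :=
  fun i hi => (Multiset.count_le_of_le i h).trans (ht i hi)

theorem OddPartsDistinct.add {s t : Multiset ℕ} (hs : OddPartsDistinct s)
    (ht : OddPartsDistinct t) (hst : Disjoint s t) : OddPartsDistinct (s + t) := by
  intro i hi
  rw [Multiset.count_add]
  by_cases his : i ∈ s
  · simpa [Multiset.count_eq_zero_of_notMem (Multiset.disjoint_left.1 hst his)] using hs i hi
  · simpa [Multiset.count_eq_zero_of_notMem his] using ht i hi

theorem natCard_partition_eq_ncard (n : ℕ) (Q : Multiset ℕ → Prop) :
    Nat.card {p : n.Partition // Q p.parts} =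
      {s : Multiset ℕ | s.sum = n ∧ (∀ i ∈ s, 0 < i) ∧ Q s}.ncard := by
  rw [← Nat.card_coe_set_eq]
  exact Nat.card_congr
    { toFun := fun p => ⟨p.1.parts, p.1.parts_sum, fun _ hi => p.1.parts_pos hi, p.2⟩
      invFun := fun s => ⟨⟨s.1, fun {i} hi => s.2.2.1 i hi, s.2.1⟩, s.2.2.2⟩ }

theorem finite_setOf_sum_eq_and_forall_pos (n : ℕ) :
    {s : Multiset ℕ | s.sum = n ∧ ∀ i ∈ s, 0 < i}.Finite := by
  refine (Set.finite_range (Nat.Partition.parts (n := n))).subset ?_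
  rintro s ⟨hsum, hpos⟩
  exact ⟨⟨s, fun {i} hi => hpos i hi, hsum⟩, rfl⟩

/-- The multisets of parts of the partitions counted by `podGtTwo n`. -/
def podGtTwoParts (n : ℕ) : Set (Multiset ℕ) :=
  {s | s.sum = n ∧ OddPartsDistinct s ∧ ∀ i ∈ s, 2 < i}

/-- The multisets of parts of the partitions counted by `o2 n`. A largest part occurring twice
already makes the multiset nonempty. -/
def o2Parts (n : ℕ) : Set (Multiset ℕ) :=
  {s | s.sum = n ∧ (∀ i ∈ s, 0 < i) ∧ OddPartsDistinct s ∧ Even s.sup ∧ 2 ≤ s.count s.sup}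

theorem podGtTwo_eq_ncard (n : ℕ) : podGtTwo n = (podGtTwoParts n).ncard := by
  refine (natCard_partition_eq_ncard n fun s => OddPartsDistinct s ∧ ∀ i ∈ s, 2 < i).trans ?_
  congr 1 with s
  exact ⟨fun ⟨hsum, _, h⟩ => ⟨hsum, h⟩,
    fun ⟨hsum, hodd, htwo⟩ => ⟨hsum, fun i hi => two_pos.trans (htwo i hi), hodd, htwo⟩⟩

theorem o2_eq_ncard (n : ℕ) : o2 n = (o2Parts n).ncard := by
  refine (natCard_partition_eq_ncard n fun s =>
    OddPartsDistinct s ∧ s ≠ 0 ∧ Even s.sup ∧ 2 ≤ s.count s.sup).trans ?_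
  congr 1 with s
  refine ⟨fun ⟨hsum, hpos, hodd, _, h⟩ => ⟨hsum, hpos, hodd, h⟩,
    fun ⟨hsum, hpos, hodd, heven, htwice⟩ => ⟨hsum, hpos, hodd, ?_, heven, htwice⟩⟩
  rintro rfl
  simp at htwice

theorem finite_podGtTwoParts (n : ℕ) : (podGtTwoParts n).Finite :=
  (finite_setOf_sum_eq_and_forall_pos n).subset fun _ hs =>
    ⟨hs.1, fun i hi => two_pos.trans (hs.2.2 i hi)⟩

/-- The cores `(k, t)` of weight `4 * k + t.sum` at most `n`. They encode the partitions counted by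
`o2 n`: the largest part is `2 * k`, and `t` holds the parts larger than `2` that are left when two
copies of `2 * k` are removed. -/
def cores (n : ℕ) : Set (ℕ × Multiset ℕ) :=
  {x | 1 ≤ x.1 ∧ OddPartsDistinct x.2 ∧ (∀ i ∈ x.2, 2 < i ∧ i ≤ 2 * x.1) ∧ 4 * x.1 + x.2.sum ≤ n}

/-- The only partition of `j` into twos and at most one `1`. -/
def onesTwos (j : ℕ) : Multiset ℕ :=
  Multiset.replicate (j % 2) 1 + Multiset.replicate (j / 2) 2

theorem sum_onesTwos (j : ℕ) : (onesTwos j).sum = j := by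
  simp only [onesTwos, Multiset.sum_add, Multiset.sum_replicate, smul_eq_mul]
  omega

theorem eq_one_or_eq_two_of_mem_onesTwos {i j : ℕ} (hi : i ∈ onesTwos j) : i = 1 ∨ i = 2 := by
  simp only [onesTwos, Multiset.mem_add, Multiset.mem_replicate] at hi
  tauto

theorem oddPartsDistinct_onesTwos (j : ℕ) : OddPartsDistinct (onesTwos j) := by
  intro i hi
  have hi2 : 2 ≠ i := by rintro rfl; exact absurd hi (by decide)
  simp only [onesTwos, Multiset.count_add, Multiset.count_replicate, if_neg hi2]
  split_ifs <;> omega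

theorem onesTwos_sum_eq_self {s : Multiset ℕ} (hs : ∀ i ∈ s, i = 1 ∨ i = 2)
    (hodd : OddPartsDistinct s) :
    onesTwos s.sum = s := by
  have hdecomp : s = Multiset.replicate (s.count 1) 1 + Multiset.replicate (s.count 2) 2 := by
    ext i
    by_cases hi : i ∈ s
    · rcases hs i hi with rfl | rfl <;> simp [Multiset.count_replicate]
    · simp only [Multiset.count_add, Multiset.count_replicate]
      split_ifs <;> simp_all
  have hsum : s.sum = s.count 1 + s.count 2 * 2 := by
    conv_lhs => rw [hdecomp]
    simp
  have hone : s.count 1 ≤ 1 := hodd 1 odd_one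
  rw [onesTwos, show s.sum % 2 = s.count 1 by omega, show s.sum / 2 = s.count 2 by omega, ← hdecomp]

theorem filter_two_lt_add_onesTwos {t : Multiset ℕ} (ht : ∀ i ∈ t, 2 < i) (j : ℕ) :
    (t + onesTwos j).filter (2 < ·) = t := by
  have hsmall : (onesTwos j).filter (2 < ·) = 0 := Multiset.filter_eq_nil.2 fun i hi => by
    rcases eq_one_or_eq_two_of_mem_onesTwos hi with rfl | rfl <;> simp
  rw [Multiset.filter_add, Multiset.filter_eq_self.2 ht, hsmall, add_zero]

theorem filter_two_lt_add_onesTwos_eq_self {s : Multiset ℕ} (hpos : ∀ i ∈ s, 0 < i)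
    (hodd : OddPartsDistinct s) :
    s.filter (2 < ·) + onesTwos (s.sum - (s.filter (2 < ·)).sum) = s := by
  have hsplit := Multiset.filter_add_not (2 < ·) s
  have hsum := congrArg Multiset.sum hsplit
  rw [Multiset.sum_add] at hsum
  have hsmall : ∀ i ∈ s.filter (¬ 2 < ·), i = 1 ∨ i = 2 := fun i hi => by
    have := hpos i (Multiset.mem_of_mem_filter hi)
    have := Multiset.of_mem_filter hi
    omega
  rw [← hsum, Nat.add_sub_cancel_left,
    onesTwos_sum_eq_self hsmall (hodd.mono (Multiset.filter_le _ _)), hsplit]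

/-- The partition of `n` with core `x`. -/
def ofCore (n : ℕ) (x : ℕ × Multiset ℕ) : Multiset ℕ :=
  2 * x.1 ::ₘ 2 * x.1 ::ₘ (x.2 + onesTwos (n - (4 * x.1 + x.2.sum)))

/-- The core of a partition counted by `o2`. -/
def coreOf (s : Multiset ℕ) : ℕ × Multiset ℕ :=
  (s.sup / 2, ((s.erase s.sup).erase s.sup).filter (2 < ·))

theorem coreOf_cons_cons {k : ℕ} {s : Multiset ℕ} (hs : ∀ i ∈ s, i ≤ 2 * k) :
    coreOf (2 * k ::ₘ 2 * k ::ₘ s) = (k, s.filter (2 < ·)) := by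
  have hsup : (2 * k ::ₘ 2 * k ::ₘ s).sup = 2 * k :=
    multiset_sup_cons_of_forall_le (by simpa using hs)
  simp [coreOf, hsup]

theorem mem_o2Parts_iff {n : ℕ} {s : Multiset ℕ} :
    s ∈ o2Parts n ↔ ∃ k t, s = 2 * k ::ₘ 2 * k ::ₘ t ∧ 1 ≤ k ∧ 4 * k + t.sum = n ∧
      OddPartsDistinct t ∧ ∀ i ∈ t, 0 < i ∧ i ≤ 2 * k := by
  constructor
  · rintro ⟨hsum, hpos, hodd, ⟨k, hk⟩, htwice⟩
    rw [hk, ← two_mul] at htwice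
    obtain ⟨t, rfl⟩ := Multiset.le_iff_exists_add.1 (Multiset.le_count_iff_replicate_le.1 htwice)
    have heven : Even (2 * k) := even_two_mul k
    simp only [Multiset.replicate_succ, Multiset.replicate_zero, Multiset.cons_add, zero_add,
      Multiset.sum_cons, Multiset.mem_cons, oddPartsDistinct_cons_of_even heven] at *
    have hk0 := hpos (2 * k) (.inl rfl)
    refine ⟨k, t, rfl, by omega, by omega, hodd, fun i hi => ⟨hpos i (by simp [hi]), ?_⟩⟩
    rw [two_mul, ← hk]
    exact Multiset.le_sup (by simp [hi])
  · rintro ⟨k, t, rfl, hk, hsum, hodd, ht⟩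
    have hsup : (2 * k ::ₘ 2 * k ::ₘ t).sup = 2 * k :=
      multiset_sup_cons_of_forall_le (by simpa using fun i hi => (ht i hi).2)
    have heven : Even (2 * k) := even_two_mul k
    refine ⟨by simp only [Multiset.sum_cons]; omega, ?_, ?_, by rwa [hsup], by simp [hsup]⟩
    · simpa [Nat.pos_of_ne_zero (Nat.one_le_iff_ne_zero.1 hk)] using fun i hi => (ht i hi).1
    · simpa only [oddPartsDistinct_cons_of_even heven] using hodd

theorem ofCore_mem_o2Parts {n : ℕ} {x : ℕ × Multiset ℕ} (hx : x ∈ cores n) :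
    ofCore n x ∈ o2Parts n := by
  obtain ⟨hk, hodd, ht, hn⟩ := hx
  refine mem_o2Parts_iff.2 ⟨x.1, _, rfl, hk, ?_, ?_, fun i hi => ?_⟩
  · rw [Multiset.sum_add, sum_onesTwos]
    omega
  · refine hodd.add (oddPartsDistinct_onesTwos _) (Multiset.disjoint_left.2 fun {i} hi hi' => ?_)
    have := ht i hi
    have := eq_one_or_eq_two_of_mem_onesTwos hi'
    omega
  · rcases Multiset.mem_add.1 hi with hi | hi
    · have := ht i hi
      omega
    · have := eq_one_or_eq_two_of_mem_onesTwos hi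
      omega

theorem coreOf_ofCore {n : ℕ} {x : ℕ × Multiset ℕ} (hx : x ∈ cores n) :
    coreOf (ofCore n x) = x := by
  obtain ⟨hk, -, ht, -⟩ := hx
  rw [ofCore, coreOf_cons_cons, filter_two_lt_add_onesTwos fun i hi => (ht i hi).1]
  intro i hi
  rcases Multiset.mem_add.1 hi with hi | hi
  · exact (ht i hi).2
  · have := eq_one_or_eq_two_of_mem_onesTwos hi
    omega

theorem coreOf_mem_cores {n : ℕ} {s : Multiset ℕ} (hs : s ∈ o2Parts n) : coreOf s ∈ cores n := by
  obtain ⟨k, t, rfl, hk, hsum, hodd, ht⟩ := mem_o2Parts_iff.1 hs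
  rw [coreOf_cons_cons fun i hi => (ht i hi).2]
  have hle : t.filter (2 < ·) ≤ t := Multiset.filter_le _ _
  refine ⟨hk, hodd.mono hle, fun i hi => ?_, ?_⟩
  · exact ⟨Multiset.of_mem_filter hi, (ht i (Multiset.mem_of_mem_filter hi)).2⟩
  · obtain ⟨r, hr⟩ := Multiset.le_iff_exists_add.1 hle
    have hsum_filter := congrArg Multiset.sum hr
    rw [Multiset.sum_add] at hsum_filter
    dsimp only
    omega

theorem ofCore_coreOf {n : ℕ} {s : Multiset ℕ} (hs : s ∈ o2Parts n) : ofCore n (coreOf s) = s := by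
  obtain ⟨k, t, rfl, -, rfl, hodd, ht⟩ := mem_o2Parts_iff.1 hs
  rw [coreOf_cons_cons fun i hi => (ht i hi).2, ofCore, Nat.add_sub_add_left,
    filter_two_lt_add_onesTwos_eq_self (fun i hi => (ht i hi).1) hodd]

theorem bijOn_coreOf (n : ℕ) : Set.BijOn coreOf (o2Parts n) (cores n) :=
  Set.InvOn.bijOn (f' := ofCore n) ⟨fun _ => ofCore_coreOf, fun _ => coreOf_ofCore⟩
    (fun _ => coreOf_mem_cores) (fun _ => ofCore_mem_o2Parts)

/-- The multisets which become the parts of a partition counted by `podGtTwo n` on adding a largest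
part. The summand `u.sup % 2` accounts for an odd largest part not being repeated. -/
def tails (n : ℕ) : Set (Multiset ℕ) :=
  {u | OddPartsDistinct u ∧ (∀ i ∈ u, 2 < i) ∧ u.sum + u.sup + u.sup % 2 ≤ n}

/-- All parts of a partition except one copy of the largest. -/
def tailOf (s : Multiset ℕ) : Multiset ℕ :=
  s.erase s.sup

theorem tailOf_cons {a : ℕ} {s : Multiset ℕ} (hs : ∀ i ∈ s, i ≤ a) : tailOf (a ::ₘ s) = s := by
  rw [tailOf, multiset_sup_cons_of_forall_le hs, Multiset.erase_cons_head]

theorem sup_add_mod_two_le_iff {a : ℕ} {u : Multiset ℕ} :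
    u.sup + u.sup % 2 ≤ a ↔ (∀ i ∈ u, i ≤ a) ∧ (Odd a → a ∉ u) := by
  rw [← Multiset.sup_le]
  constructor
  · refine fun h => ⟨by omega, fun ha hau => ?_⟩
    have := Multiset.le_sup hau
    rw [Nat.odd_iff] at ha
    omega
  · rintro ⟨hle, hau⟩
    rcases hle.lt_or_eq with hlt | rfl
    · omega
    · rcases eq_or_ne u 0 with rfl | hu
      · simp
      · have := Nat.not_odd_iff.1 fun ha => hau ha (multiset_sup_mem hu)
        omega

theorem mem_podGtTwoParts_iff {n : ℕ} (hn : 2 < n) {s : Multiset ℕ} :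
    s ∈ podGtTwoParts n ↔ ∃ u ∈ tails n, s = (n - u.sum) ::ₘ u := by
  constructor
  · rintro ⟨rfl, hodd, htwo⟩
    obtain ⟨a, u, rfl, hu⟩ := multiset_exists_eq_cons_forall_le (s := s) (by rintro rfl; simp at hn)
    obtain ⟨hau, hodd⟩ := oddPartsDistinct_cons.1 hodd
    have hsup : u.sup + u.sup % 2 ≤ a := sup_add_mod_two_le_iff.2 ⟨hu, hau⟩
    refine ⟨u, ⟨hodd, fun i hi => htwo i (by simp [hi]), ?_⟩, by simp⟩
    rw [Multiset.sum_cons]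
    omega
  · rintro ⟨u, ⟨hodd, htwo, hle⟩, rfl⟩
    have hlargest : 2 < n - u.sum := by
      rcases eq_or_ne u 0 with rfl | hu
      · simpa
      · have := htwo _ (multiset_sup_mem hu)
        omega
    refine ⟨by rw [Multiset.sum_cons]; omega, oddPartsDistinct_cons.2 ⟨?_, hodd⟩, ?_⟩
    · exact (sup_add_mod_two_le_iff.1 (by omega)).2
    · simpa [hlargest] using htwo

theorem tailOf_cons_of_mem_tails {n : ℕ} {u : Multiset ℕ} (hu : u ∈ tails n) :
    tailOf ((n - u.sum) ::ₘ u) = u := by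
  have := hu.2.2
  exact tailOf_cons (sup_add_mod_two_le_iff.1 (by omega)).1

theorem bijOn_tailOf {n : ℕ} (hn : 2 < n) : Set.BijOn tailOf (podGtTwoParts n) (tails n) := by
  refine Set.InvOn.bijOn (f' := fun u => (n - u.sum) ::ₘ u)
    ⟨fun s hs => ?_, fun u hu => tailOf_cons_of_mem_tails hu⟩ (fun s hs => ?_)
    (fun u hu => (mem_podGtTwoParts_iff hn).2 ⟨u, hu, rfl⟩)
  all_goals
    obtain ⟨u, hu, rfl⟩ := (mem_podGtTwoParts_iff hn).1 hs
    simp only [tailOf_cons_of_mem_tails hu, hu]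

/-- The core obtained from a tail by removing its largest part. The maximum with `1` sends the empty
tail to the core `(1, 0)`. -/
def coreOfTail (u : Multiset ℕ) : ℕ × Multiset ℕ :=
  (max 1 (u.sup / 2), tailOf u)

theorem coreOfTail_cons {a : ℕ} {t : Multiset ℕ} (ha : 2 ≤ a) (ht : ∀ i ∈ t, i ≤ a) :
    coreOfTail (a ::ₘ t) = (a / 2, t) := by
  rw [coreOfTail, tailOf_cons ht, multiset_sup_cons_of_forall_le ht, max_eq_right (by omega)]

theorem cons_mem_tails_iff {a n : ℕ} {t : Multiset ℕ} (ht : ∀ i ∈ t, i ≤ a) :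
    a ::ₘ t ∈ tails n ↔ ((Odd a → a ∉ t) ∧ OddPartsDistinct t) ∧
      (2 < a ∧ ∀ i ∈ t, 2 < i) ∧ a + t.sum + a + a % 2 ≤ n := by
  simp only [tails, Set.mem_ofPred_eq, oddPartsDistinct_cons, Multiset.forall_mem_cons,
    Multiset.sum_cons, multiset_sup_cons_of_forall_le ht]

theorem mem_tails_and_even_sup_iff {n : ℕ} {u : Multiset ℕ} :
    u ∈ tails n ∧ Even u.sup ↔
      u = 0 ∨ ∃ x ∈ cores n, 2 ≤ x.1 ∧ u = 2 * x.1 ::ₘ x.2 := by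
  constructor
  · rintro ⟨htails, heven⟩
    refine or_iff_not_imp_left.2 fun hu => ?_
    obtain ⟨a, t, rfl, ht⟩ := multiset_exists_eq_cons_forall_le hu
    rw [multiset_sup_cons_of_forall_le ht] at heven
    obtain ⟨⟨-, hodd⟩, ⟨ha, htwo⟩, hle⟩ := (cons_mem_tails_iff ht).1 htails
    obtain ⟨k, rfl⟩ := heven.two_dvd
    exact ⟨(k, t), ⟨by dsimp only; omega, hodd, fun i hi => ⟨htwo i hi, ht i hi⟩,
      by dsimp only; omega⟩, by dsimp only; omega, rfl⟩
  · rintro (rfl | ⟨⟨k, t⟩, ⟨-, hodd, ht, hle⟩, hk, rfl⟩)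
    · simp [tails, oddPartsDistinct_zero]
    · have hsup := fun i hi => (ht i hi).2
      dsimp only at *
      refine ⟨(cons_mem_tails_iff hsup).2 ⟨⟨fun h => ?_, hodd⟩,
        ⟨by omega, fun i hi => (ht i hi).1⟩, by omega⟩, ?_⟩
      · exact absurd (even_two_mul k) (Nat.not_even_iff_odd.2 h)
      · rw [multiset_sup_cons_of_forall_le hsup]
        exact even_two_mul k

theorem mem_tails_and_odd_sup_iff {n : ℕ} {u : Multiset ℕ} :
    u ∈ tails n ∧ Odd u.sup ↔ ∃ x ∈ cores (n - 3), u = (2 * x.1 + 1) ::ₘ x.2 := by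
  constructor
  · rintro ⟨htails, hoddsup⟩
    obtain ⟨a, t, rfl, ht⟩ :=
      multiset_exists_eq_cons_forall_le (s := u) (by rintro rfl; simp at hoddsup)
    rw [multiset_sup_cons_of_forall_le ht] at hoddsup
    obtain ⟨⟨hat, hodd⟩, ⟨ha, htwo⟩, hle⟩ := (cons_mem_tails_iff ht).1 htails
    obtain ⟨k, rfl⟩ := hoddsup
    have hlt : ∀ i ∈ t, i < 2 * k + 1 := fun i hi =>
      (ht i hi).lt_of_ne fun h => hat (odd_two_mul_add_one k) (h ▸ hi)
    exact ⟨(k, t), ⟨by dsimp only; omega, hodd,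
      fun i hi => ⟨htwo i hi, Nat.lt_succ_iff.1 (hlt i hi)⟩, by dsimp only; omega⟩, rfl⟩
  · rintro ⟨⟨k, t⟩, ⟨hk, hodd, ht, hle⟩, rfl⟩
    dsimp only at *
    have hsup : ∀ i ∈ t, i ≤ 2 * k + 1 := fun i hi => (ht i hi).2.trans (Nat.le_succ _)
    have hnotMem : 2 * k + 1 ∉ t := fun h => by have := (ht _ h).2; omega
    refine ⟨(cons_mem_tails_iff hsup).2 ⟨⟨fun _ => hnotMem, hodd⟩,
      ⟨by omega, fun i hi => (ht i hi).1⟩, by omega⟩, ?_⟩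
    rw [multiset_sup_cons_of_forall_le hsup]
    exact odd_two_mul_add_one k

theorem eq_zero_of_one_mem_cores {n : ℕ} {t : Multiset ℕ} (h : (1, t) ∈ cores n) : t = 0 :=
  Multiset.eq_zero_of_forall_notMem fun i hi => by
    have := h.2.2.1 i hi
    dsimp only at this
    omega

theorem coreOfTail_zero : coreOfTail 0 = (1, 0) := by
  simp [coreOfTail, tailOf]

theorem coreOfTail_cons_even {n : ℕ} {x : ℕ × Multiset ℕ} (hx : x ∈ cores n) :
    coreOfTail (2 * x.1 ::ₘ x.2) = x := by
  have := hx.1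
  rw [coreOfTail_cons (by omega) fun i hi => (hx.2.2.1 i hi).2, Nat.mul_div_cancel_left _ two_pos]

theorem coreOfTail_cons_odd {n : ℕ} {x : ℕ × Multiset ℕ} (hx : x ∈ cores n) :
    coreOfTail ((2 * x.1 + 1) ::ₘ x.2) = x := by
  have := hx.1
  rw [coreOfTail_cons (by omega) fun i hi => (hx.2.2.1 i hi).2.trans (Nat.le_succ _),
    show (2 * x.1 + 1) / 2 = x.1 by omega]

theorem bijOn_coreOfTail_even {n : ℕ} (hn : 4 ≤ n) :
    Set.BijOn coreOfTail {u | u ∈ tails n ∧ Even u.sup} (cores n) := by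
  have hcore : (1, 0) ∈ cores n := ⟨le_rfl, oddPartsDistinct_zero, by simp, by simpa⟩
  simp only [mem_tails_and_even_sup_iff]
  refine ⟨?_, ?_, ?_⟩
  · rintro u (rfl | ⟨x, hx, -, rfl⟩)
    · rwa [coreOfTail_zero]
    · rwa [coreOfTail_cons_even hx]
  · rintro u (rfl | ⟨x, hx, hk, rfl⟩) v (rfl | ⟨y, hy, hl, rfl⟩) h
    · rfl
    · rw [coreOfTail_zero, coreOfTail_cons_even hy] at h
      simp [← h] at hl
    · rw [coreOfTail_zero, coreOfTail_cons_even hx] at h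
      simp [h] at hk
    · rw [coreOfTail_cons_even hx, coreOfTail_cons_even hy] at h
      rw [h]
  · rintro ⟨k, t⟩ hx
    rcases (show 1 ≤ k from hx.1).eq_or_lt with rfl | hk
    · exact ⟨0, .inl rfl, by rw [coreOfTail_zero, eq_zero_of_one_mem_cores hx]⟩
    · exact ⟨_, .inr ⟨_, hx, hk, rfl⟩, coreOfTail_cons_even hx⟩

theorem bijOn_coreOfTail_odd (n : ℕ) :
    Set.BijOn coreOfTail {u | u ∈ tails n ∧ Odd u.sup} (cores (n - 3)) := by
  simp only [mem_tails_and_odd_sup_iff]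
  refine ⟨?_, ?_, fun x hx => ⟨_, ⟨x, hx, rfl⟩, coreOfTail_cons_odd hx⟩⟩
  · rintro u ⟨x, hx, rfl⟩
    rwa [coreOfTail_cons_odd hx]
  · rintro u ⟨x, hx, rfl⟩ v ⟨y, hy, rfl⟩ h
    rw [coreOfTail_cons_odd hx, coreOfTail_cons_odd hy] at h
    rw [h]

theorem ncard_tails {n : ℕ} (hn : 4 ≤ n) :
    (tails n).ncard = (cores n).ncard + (cores (n - 3)).ncard := by
  have hfin : (tails n).Finite :=
    (bijOn_tailOf (by omega)).finite_iff_finite.1 (finite_podGtTwoParts n)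
  rw [← (bijOn_coreOfTail_even hn).ncard_eq, ← (bijOn_coreOfTail_odd n).ncard_eq]
  simp only [← Nat.not_even_iff_odd]
  exact (Set.ncard_inter_add_ncard_sdiff_eq_ncard (tails n) {u | Even u.sup} hfin).symm

theorem o2_add_o2_eq_podGtTwo : ∀ n : ℕ, 4 < n → o2 n + o2 (n - 3) = podGtTwo n := by
  intro n hn
  calc o2 n + o2 (n - 3)
      = (cores n).ncard + (cores (n - 3)).ncard := by
        rw [o2_eq_ncard, o2_eq_ncard, (bijOn_coreOf n).ncard_eq,
          (bijOn_coreOf (n - 3)).ncard_eq]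
    _ = (tails n).ncard := (ncard_tails hn.le).symm
    _ = (podGtTwoParts n).ncard := (bijOn_tailOf (by omega)).ncard_eq.symm
    _ = podGtTwo n := (podGtTwo_eq_ncard n).symm
end

section
/- For every integer n ≥ 2, d3(n-1) equals the number of partitions of n in which no even part is repeated, the largest part is even, and the largest part minus 1 does not occur as a part (equivalently, partitions of the form (2j, k, ...) with no even part repeated and second largest part k ≤ 2j - 2). (The bijection adds 1 to the largest part.) -/
/-- Number of partitions of n with no even part repeated, largest part odd,
and the largest part appearing exactly once. -/
noncomputable def d3 (n : ℕ) : ℕ :=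
  Nat.card {p : n.Partition // EvenDistinct p ∧ Odd (maxPart p) ∧
    p.parts.count (maxPart p) = 1}

/-!
Say that a partition has top gap larger than `c` if its largest part exceeds by more than `c` both
zero and every other part, parts being counted with multiplicity. Adding `c` to the largest part
maps the partitions with top gap larger than `b` bijectively onto those with top gap larger than
`b + c`, and it leaves the other parts alone, so it preserves distinctness of the even parts.
Take `b = 0` and `c = 1`: a top gap larger than `0` means that the largest part occurs once, and
for an even largest part that occurs once a top gap larger than `1` means that its predecessor is
not a part. The parity of the largest part changes under the bijection.
-/

section ReplaceMax

variable {α : Type*} [LinearOrder α] [OrderBot α] {s : Multiset α} {m : α}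

theorem sup_mem_of_ne_zero (hs : s ≠ 0) : s.sup ∈ s := by
  obtain ⟨a, ha, hmax⟩ := s.toFinset.exists_max_image id (Multiset.toFinset_nonempty.2 hs)
  simp only [Multiset.mem_toFinset, id_eq] at ha hmax
  rwa [(Multiset.sup_le.2 hmax).antisymm (Multiset.le_sup ha)]

/-- The multiset `s` with one copy of its largest element replaced by `m`. On the empty multiset,
whose `sup` is the junk value `⊥`, this is `{m}`. -/
def replaceMax (s : Multiset α) (m : α) : Multiset α := m ::ₘ s.erase s.sup

theorem forall_mem_replaceMax {P : α → Prop} (hs : ∀ x ∈ s, P x) (hm : P m) :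
    ∀ x ∈ replaceMax s m, P x :=
  Multiset.forall_mem_cons.2 ⟨hm, fun x hx => hs x (Multiset.mem_of_mem_erase hx)⟩

theorem sup_replaceMax (h : ∀ x ∈ s.erase s.sup, x ≤ m) : (replaceMax s m).sup = m := by
  rw [replaceMax, Multiset.sup_cons, sup_eq_left]
  exact Multiset.sup_le.2 h

theorem erase_sup_replaceMax (h : ∀ x ∈ s.erase s.sup, x ≤ m) :
    (replaceMax s m).erase (replaceMax s m).sup = s.erase s.sup := by
  rw [sup_replaceMax h, replaceMax, Multiset.erase_cons_head]

theorem replaceMax_replaceMax_sup (hs : s ≠ 0) (h : ∀ x ∈ s.erase s.sup, x ≤ m) :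
    replaceMax (replaceMax s m) s.sup = s := by
  rw [replaceMax, erase_sup_replaceMax h, Multiset.cons_erase (sup_mem_of_ne_zero hs)]

theorem sum_replaceMax_add_sup (s : Multiset ℕ) (m : ℕ) :
    (replaceMax s m).sum + s.sup = s.sum + m := by
  rcases eq_or_ne s 0 with rfl | hs
  · simp [replaceMax]
  · rw [replaceMax, Multiset.sum_cons, ← Multiset.sum_erase (sup_mem_of_ne_zero hs)]
    ring

end ReplaceMax

/-- The largest element of `s` exceeds `0` and all the other elements of `s` by more than `c`.
Only one copy of the largest element is set aside, so the largest element cannot be repeated. -/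
structure HasTopGap (c : ℕ) (s : Multiset ℕ) : Prop where
  lt_sup : c < s.sup
  add_lt_sup : ∀ x ∈ s.erase s.sup, x + c < s.sup

section HasTopGap

variable {s : Multiset ℕ} {b c m : ℕ}

theorem hasTopGap_replaceMax (hm : c < m) (h : ∀ x ∈ s.erase s.sup, x + c < m) :
    HasTopGap c (replaceMax s m) := by
  have hle : ∀ x ∈ s.erase s.sup, x ≤ m := fun x hx => (Nat.le_add_right x c).trans (h x hx).le
  constructor
  · rwa [sup_replaceMax hle]
  · rwa [erase_sup_replaceMax hle, sup_replaceMax hle]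

namespace HasTopGap

theorem ne_zero (h : HasTopGap c s) : s ≠ 0 := by
  rintro rfl
  exact Nat.not_lt_zero c h.lt_sup

theorem le_sup_add (h : HasTopGap b s) (c : ℕ) : ∀ x ∈ s.erase s.sup, x ≤ s.sup + c :=
  fun x hx => by have := h.add_lt_sup x hx; omega

theorem le_sup_sub (h : HasTopGap (b + c) s) : ∀ x ∈ s.erase s.sup, x ≤ s.sup - c :=
  fun x hx => by have := h.add_lt_sup x hx; omega

theorem replaceMax_sup_add (h : HasTopGap b s) (c : ℕ) :
    HasTopGap (b + c) (replaceMax s (s.sup + c)) :=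
  hasTopGap_replaceMax (Nat.add_lt_add_right h.lt_sup c)
    fun x hx => by have := h.add_lt_sup x hx; omega

theorem replaceMax_sup_sub (h : HasTopGap (b + c) s) : HasTopGap b (replaceMax s (s.sup - c)) :=
  hasTopGap_replaceMax (Nat.lt_sub_of_add_lt h.lt_sup)
    fun x hx => by have := h.add_lt_sup x hx; omega

theorem count_sup (h : HasTopGap c s) : s.count s.sup = 1 := by
  have hnotMem : s.sup ∉ s.erase s.sup := fun hmem => by
    have := h.add_lt_sup _ hmem
    omega
  have hcount := Multiset.count_eq_zero.2 hnotMem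
  rw [Multiset.count_erase_self] at hcount
  exact (Nat.sub_eq_zero_iff_le.1 hcount).antisymm
    (Multiset.one_le_count_iff_mem.2 (sup_mem_of_ne_zero h.ne_zero))

theorem count_le_one_iff_count_erase_sup (h : HasTopGap c s) (i : ℕ) :
    s.count i ≤ 1 ↔ (s.erase s.sup).count i ≤ 1 := by
  rcases eq_or_ne i s.sup with rfl | hi
  · simp [h.count_sup]
  · rw [Multiset.count_erase_of_ne hi]

theorem count_replaceMax_le_one_iff (h : HasTopGap b s) (c i : ℕ) :
    (replaceMax s (s.sup + c)).count i ≤ 1 ↔ s.count i ≤ 1 := by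
  rw [(h.replaceMax_sup_add c).count_le_one_iff_count_erase_sup,
    erase_sup_replaceMax (h.le_sup_add c), ← h.count_le_one_iff_count_erase_sup]

end HasTopGap

theorem hasTopGap_zero_iff (hs : ∀ x ∈ s, 0 < x) : HasTopGap 0 s ↔ s.count s.sup = 1 := by
  refine ⟨HasTopGap.count_sup, fun hcount => ?_⟩
  have hmem : s.sup ∈ s := Multiset.count_pos.1 (hcount ▸ Nat.one_pos)
  have hnotMem : s.sup ∉ s.erase s.sup := by
    rw [← Multiset.count_eq_zero, Multiset.count_erase_self, hcount]
  exact ⟨hs _ hmem, fun x hx => (Multiset.le_sup (Multiset.mem_of_mem_erase hx)).lt_of_ne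
    (ne_of_mem_of_not_mem hx hnotMem)⟩

theorem hasTopGap_succ_iff :
    HasTopGap (c + 1) s ↔ HasTopGap c s ∧ s.sup ≠ c + 1 ∧ s.sup - (c + 1) ∉ s := by
  constructor
  · intro h
    have hlt := h.lt_sup
    refine ⟨⟨Nat.lt_of_succ_lt hlt, fun x hx => Nat.lt_of_succ_lt (h.add_lt_sup x hx)⟩,
      hlt.ne', fun hmem => ?_⟩
    have hne : s.sup - (c + 1) ≠ s.sup := by omega
    have := h.add_lt_sup _ ((Multiset.mem_erase_of_ne hne).2 hmem)
    omega
  · rintro ⟨h, hne, hnotMem⟩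
    refine ⟨Nat.lt_of_le_of_ne h.lt_sup hne.symm, fun x hx => ?_⟩
    have hlt := h.add_lt_sup x hx
    have hx_ne := ne_of_mem_of_not_mem (Multiset.mem_of_mem_erase hx) hnotMem
    omega

end HasTopGap

section Partition

variable {n b c : ℕ}

/-- The partition `p` of `n` with one copy of its largest part replaced by `m`. The size `k` of
the result is tied to `n` by an equation, which avoids truncated subtraction. -/
def replaceMaxPart {k : ℕ} (p : n.Partition) (m : ℕ) (hm : 0 < m)
    (hk : k + maxPart p = n + m) : k.Partition where
  parts := replaceMax p.parts m
  parts_pos := forall_mem_replaceMax (fun _ => p.parts_pos) hm _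
  parts_sum := by
    have hsum := sum_replaceMax_add_sup p.parts m
    rw [p.parts_sum] at hsum
    exact Nat.add_right_cancel (hsum.trans hk.symm)

/-- Adding `c` to the largest part, as a bijection from the partitions with top gap larger
than `b` to those with top gap larger than `b + c`. -/
def addMaxPartEquiv (n b c : ℕ) :
    {p : n.Partition // HasTopGap b p.parts} ≃
      {q : (n + c).Partition // HasTopGap (b + c) q.parts} where
  toFun := fun ⟨p, hp⟩ =>
    ⟨replaceMaxPart p (maxPart p + c) (Nat.add_pos_left (Nat.zero_lt_of_lt hp.lt_sup) c)
      (by omega), hp.replaceMax_sup_add c⟩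
  invFun := fun ⟨q, hq⟩ =>
    have hlt : b + c < maxPart q := hq.lt_sup
    ⟨replaceMaxPart q (maxPart q - c) (by omega) (by omega), hq.replaceMax_sup_sub⟩
  left_inv := fun ⟨p, hp⟩ => Subtype.ext <| Nat.Partition.ext <| by
    have hle := hp.le_sup_add c
    simp only [replaceMaxPart, maxPart, sup_replaceMax hle, Nat.add_sub_cancel]
    exact replaceMax_replaceMax_sup hp.ne_zero hle
  right_inv := fun ⟨q, hq⟩ => Subtype.ext <| Nat.Partition.ext <| by
    have hle := hq.le_sup_sub
    have hc : c ≤ q.parts.sup := (Nat.le_add_left c b).trans hq.lt_sup.le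
    simp only [replaceMaxPart, maxPart, sup_replaceMax hle, Nat.sub_add_cancel hc]
    exact replaceMax_replaceMax_sup hq.ne_zero hle

theorem maxPart_addMaxPartEquiv (p : {p : n.Partition // HasTopGap b p.parts}) :
    maxPart (addMaxPartEquiv n b c p).1 = maxPart p.1 + c :=
  sup_replaceMax (p.2.le_sup_add c)

theorem evenDistinct_addMaxPartEquiv_iff (p : {p : n.Partition // HasTopGap b p.parts}) :
    EvenDistinct (addMaxPartEquiv n b c p).1 ↔ EvenDistinct p.1 :=
  forall₂_congr fun i _ => p.2.count_replaceMax_le_one_iff c i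

theorem count_maxPart_eq_one_iff_hasTopGap (p : n.Partition) :
    p.parts.count (maxPart p) = 1 ↔ HasTopGap 0 p.parts :=
  (hasTopGap_zero_iff fun _ => p.parts_pos).symm

theorem pred_maxPart_notMem_iff_hasTopGap {p : n.Partition} (hp : EvenDistinct p)
    (heven : Even (maxPart p)) :
    p.parts ≠ 0 ∧ maxPart p - 1 ∉ p.parts ↔ HasTopGap 1 p.parts := by
  have hne_one : maxPart p ≠ 1 := fun h => Nat.not_even_one (h ▸ heven)
  have hgap : p.parts ≠ 0 ↔ HasTopGap 0 p.parts := by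
    refine ⟨fun hne => ?_, HasTopGap.ne_zero⟩
    rw [← count_maxPart_eq_one_iff_hasTopGap]
    exact (hp _ heven).antisymm (Multiset.one_le_count_iff_mem.2 (sup_mem_of_ne_zero hne))
  rw [hgap, hasTopGap_succ_iff]
  exact and_congr_right fun _ => (and_iff_right hne_one).symm

/-- Restriction of `addMaxPartEquiv` for `b = 0`, `c = 1` to the two families of partitions
with distinct even parts. -/
def oddMaxEquivEvenMax (n : ℕ) :
    {p : n.Partition // HasTopGap 0 p.parts ∧ EvenDistinct p ∧ Odd (maxPart p)} ≃
      {q : (n + 1).Partition // HasTopGap 1 q.parts ∧ EvenDistinct q ∧ Even (maxPart q)} :=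
  (Equiv.subtypeSubtypeEquivSubtypeInter _ _).symm.trans <|
    ((addMaxPartEquiv n 0 1).subtypeEquiv fun p => by
      rw [evenDistinct_addMaxPartEquiv_iff, maxPart_addMaxPartEquiv, Nat.even_add_one,
        Nat.not_even_iff_odd]).trans <|
    Equiv.subtypeSubtypeEquivSubtypeInter _ _

end Partition

theorem d3_eq_card_largest_even_pred_not_mem : ∀ n : ℕ, 2 ≤ n →
    d3 (n - 1) =
      Nat.card {p : n.Partition // EvenDistinct p ∧ p.parts ≠ 0 ∧ Even (maxPart p) ∧
        maxPart p - 1 ∉ p.parts} := by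
  intro n hn
  obtain ⟨k, rfl⟩ : ∃ k, n = k + 1 := ⟨n - 1, by omega⟩
  calc
    d3 k = Nat.card {p : k.Partition // HasTopGap 0 p.parts ∧ EvenDistinct p ∧
        Odd (maxPart p)} :=
      Nat.card_congr <| Equiv.subtypeEquivRight fun p => by
        rw [count_maxPart_eq_one_iff_hasTopGap]
        tauto
    _ = Nat.card {q : (k + 1).Partition // HasTopGap 1 q.parts ∧ EvenDistinct q ∧
        Even (maxPart q)} :=
      Nat.card_congr (oddMaxEquivEvenMax k)
    _ = _ :=
      Nat.card_congr <| Equiv.subtypeEquivRight fun q => by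
        have := pred_maxPart_notMem_iff_hasTopGap (p := q)
        tauto
end

section
/- For every integer n ≥ 2, the number of partitions of n in which no even part is repeated, at least one part equals 1, the largest part is odd, and either the largest part appears at least twice or the largest part minus 1 also occurs as a part, equals the number of partitions of n in which no even part is repeated, no part equals 1, and either the largest part is even, or the largest part is odd, appears exactly once, and the largest part minus 1 does not occur as a part. -/
/-!
Adding a part `1` is a bijection from the partitions of `n - 1` without repeated even part onto the
set `A` of those of `n` that contain a `1`. Adding `1` to one copy of the largest part is a
bijection from the same partitions of `n - 1` onto the set `B` of those of `n` whose largest part is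
even, or is odd, occurs once and exceeds every other part by at least `2`. Hence `A` and `B` have
the same cardinality, and therefore so do `A \ B` and `B \ A`.
-/

theorem sup_mem_of_ne_zero_s11 {α : Type*} [LinearOrder α] [OrderBot α] {s : Multiset α}
    (hs : s ≠ 0) : s.sup ∈ s := by
  obtain ⟨a, ha, hsup⟩ := s.toFinset.exists_mem_eq_sup (Multiset.toFinset_nonempty.2 hs) id
  have hdedup : s.toFinset.sup id = s.sup := by
    rw [Finset.sup_def, Multiset.map_id, Multiset.toFinset_val, Multiset.sup_dedup]
  rw [← hdedup, hsup]
  exact Multiset.mem_toFinset.1 ha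

section Partition

variable {m n : ℕ}

theorem parts_ne_zero [NeZero n] (p : n.Partition) : p.parts ≠ 0 := by
  intro h
  apply NeZero.ne n
  rw [← p.parts_sum, h, Multiset.sum_zero]

theorem le_maxPart {p : n.Partition} {i : ℕ} (hi : i ∈ p.parts) : i ≤ maxPart p :=
  Multiset.le_sup hi

theorem maxPart_mem [NeZero n] (p : n.Partition) : maxPart p ∈ p.parts :=
  sup_mem_of_ne_zero_s11 (parts_ne_zero p)

theorem maxPart_add_one_notMem (p : n.Partition) : maxPart p + 1 ∉ p.parts :=
  fun h => (le_maxPart h).not_gt (Nat.lt_succ_self _)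

theorem maxPart_cons_erase [NeZero n] (p : n.Partition) :
    maxPart p ::ₘ p.parts.erase (maxPart p) = p.parts :=
  Multiset.cons_erase (maxPart_mem p)

theorem maxPart_eq_of_parts_eq_cons {p : n.Partition} {a : ℕ} {t : Multiset ℕ}
    (hp : p.parts = a ::ₘ t) (ht : ∀ i ∈ t, i ≤ a) : maxPart p = a := by
  rw [maxPart, hp, Multiset.sup_cons, sup_eq_left.2 (Multiset.sup_le.2 ht)]

theorem one_lt_maxPart_of_count_eq_one (hn : 2 ≤ n) {p : n.Partition}
    (hp : p.parts.count (maxPart p) = 1) : 1 < maxPart p := by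
  by_contra! hle
  have all_one : ∀ i ∈ p.parts, i = 1 := fun i hi =>
    le_antisymm ((le_maxPart hi).trans hle) (p.parts_pos hi)
  have max_one : maxPart p = 1 :=
    all_one _ (Multiset.one_le_count_iff_mem.1 hp.ge)
  have parts_eq : p.parts = Multiset.replicate 1 1 := by
    have h := Multiset.eq_replicate_card.2 all_one
    rwa [← Multiset.count_eq_card.2 fun i hi => (all_one i hi).symm, ← max_one, hp, max_one] at h
  have sum_eq := p.parts_sum
  rw [parts_eq, Multiset.sum_replicate, one_smul] at sum_eq
  omega

theorem evenDistinct_iff_of_parts_eq_cons {p : n.Partition} {a : ℕ} {t : Multiset ℕ}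
    (hp : p.parts = a ::ₘ t) :
    EvenDistinct p ↔ (∀ i, Even i → t.count i ≤ 1) ∧ (Even a → a ∉ t) := by
  simp only [EvenDistinct, hp, Multiset.count_cons, ← Multiset.count_eq_zero]
  grind

theorem ncard_evenDistinct_with_odd_part {k : ℕ} (hk : Odd k) (hkn : k ≤ n) :
    {p : n.Partition | k ∈ p.parts ∧ EvenDistinct p}.ncard =
      {p : (n - k).Partition | EvenDistinct p}.ncard := by
  refine Nat.card_congr ((Equiv.subtypeSubtypeEquivSubtypeInter _ _).symm.trans
    ((Nat.Partition.partitionWithPartEquiv hk.pos hkn).subtypeEquiv fun ⟨p, hp⟩ => ?_))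
  rw [evenDistinct_iff_of_parts_eq_cons (Multiset.cons_erase hp).symm]
  simp [EvenDistinct, Nat.not_even_iff_odd.2 hk]

/-- The partition of `m + 1` obtained from a partition of `m` by adding `1` to one copy of its
largest part. -/
def incMaxPart [NeZero m] (p : m.Partition) : (m + 1).Partition where
  parts := (maxPart p + 1) ::ₘ p.parts.erase (maxPart p)
  parts_pos {i} hi := by
    rcases Multiset.mem_cons.1 hi with rfl | hi
    · exact Nat.succ_pos _
    · exact p.parts_pos (Multiset.mem_of_mem_erase hi)
  parts_sum := by
    have h := congrArg Multiset.sum (maxPart_cons_erase p)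
    rw [Multiset.sum_cons, p.parts_sum] at h
    rw [Multiset.sum_cons]
    omega

/-- The condition that characterises, among the partitions without repeated even part, those which
`incMaxPart` produces from a partition without repeated even part. The clause `p.parts ≠ 0` excludes
the empty partition, whose `maxPart` is the even number `0` by convention. -/
def IsRaised (p : n.Partition) : Prop :=
  (p.parts ≠ 0 ∧ Even (maxPart p)) ∨
    (Odd (maxPart p) ∧ p.parts.count (maxPart p) = 1 ∧ maxPart p - 1 ∉ p.parts)

theorem not_isRaised_iff [NeZero n] {p : n.Partition} :
    ¬IsRaised p ↔
      Odd (maxPart p) ∧ (2 ≤ p.parts.count (maxPart p) ∨ maxPart p - 1 ∈ p.parts) := by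
  have hcount : 1 ≤ p.parts.count (maxPart p) := Multiset.one_le_count_iff_mem.2 (maxPart_mem p)
  have hne := parts_ne_zero p
  grind [IsRaised]

theorem EvenDistinct.count_maxPart_eq_one [NeZero n] {p : n.Partition} (hp : EvenDistinct p)
    (hraised : IsRaised p) : p.parts.count (maxPart p) = 1 := by
  rcases hraised with ⟨-, heven⟩ | ⟨-, hcount, -⟩
  · exact (hp _ heven).antisymm (Multiset.one_le_count_iff_mem.2 (maxPart_mem p))
  · exact hcount

section IncMaxPart

variable [NeZero m]

theorem maxPart_incMaxPart (p : m.Partition) : maxPart (incMaxPart p) = maxPart p + 1 :=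
  maxPart_eq_of_parts_eq_cons rfl fun _ hi =>
    (le_maxPart (Multiset.mem_of_mem_erase hi)).trans (Nat.le_succ _)

theorem incMaxPart_injective : Function.Injective (incMaxPart (m := m)) := by
  intro p q h
  have hmax : maxPart p = maxPart q := by
    simpa only [maxPart_incMaxPart, Nat.add_right_cancel_iff] using congrArg maxPart h
  have hrest : p.parts.erase (maxPart p) = q.parts.erase (maxPart q) := by
    simpa only [incMaxPart, hmax, Multiset.cons_inj_right] using congrArg Nat.Partition.parts h
  apply Nat.Partition.ext
  rw [← maxPart_cons_erase p, ← maxPart_cons_erase q, hrest, hmax]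

theorem mem_range_incMaxPart_of_count_eq_one {q : (m + 1).Partition}
    (hq : q.parts.count (maxPart q) = 1) : q ∈ Set.range (incMaxPart (m := m)) := by
  set t := q.parts.erase (maxPart q) with ht
  have hmax : 1 < maxPart q :=
    one_lt_maxPart_of_count_eq_one (Nat.succ_le_succ (NeZero.one_le (n := m))) hq
  have hcons : maxPart q ::ₘ t = q.parts := maxPart_cons_erase q
  have hnotMem : maxPart q ∉ t := by
    rw [← Multiset.count_eq_zero, ht, Multiset.count_erase_self, hq]
  have hle : ∀ i ∈ t, i ≤ maxPart q - 1 := fun i hi =>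
    Nat.le_sub_one_of_lt <| (le_maxPart (Multiset.mem_of_mem_erase hi)).lt_of_ne
      (ne_of_mem_of_not_mem hi hnotMem)
  let p : m.Partition :=
    { parts := (maxPart q - 1) ::ₘ t
      parts_pos := fun {i} hi => by
        rcases Multiset.mem_cons.1 hi with rfl | hi
        · exact Nat.sub_pos_of_lt hmax
        · exact q.parts_pos (Multiset.mem_of_mem_erase hi)
      parts_sum := by
        have hsum := q.parts_sum
        rw [← hcons, Multiset.sum_cons] at hsum
        rw [Multiset.sum_cons]
        omega }
  have hp : maxPart p = maxPart q - 1 := maxPart_eq_of_parts_eq_cons rfl hle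
  refine ⟨p, Nat.Partition.ext ?_⟩
  simp only [incMaxPart, hp, p, Multiset.erase_cons_head, Nat.sub_add_cancel hmax.le, hcons]

theorem isRaised_incMaxPart_iff {p : m.Partition} :
    IsRaised (incMaxPart p) ↔
      (Even (maxPart p) → maxPart p ∉ p.parts.erase (maxPart p)) := by
  have hnotMem : maxPart p + 1 ∉ p.parts.erase (maxPart p) :=
    mt Multiset.mem_of_mem_erase (maxPart_add_one_notMem p)
  have hcount : (incMaxPart p).parts.count (maxPart p + 1) = 1 := by
    rw [incMaxPart, Multiset.count_cons_self, Multiset.count_eq_zero_of_notMem hnotMem]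
  have hmem : maxPart p ∈ (incMaxPart p).parts ↔ maxPart p ∈ p.parts.erase (maxPart p) := by
    simp [incMaxPart]
  have hne := parts_ne_zero (incMaxPart p)
  simp only [IsRaised, maxPart_incMaxPart, hcount, Nat.add_sub_cancel, hmem]
  grind

theorem evenDistinct_and_isRaised_incMaxPart_iff {p : m.Partition} :
    EvenDistinct (incMaxPart p) ∧ IsRaised (incMaxPart p) ↔ EvenDistinct p := by
  have hnotMem : maxPart p + 1 ∉ p.parts.erase (maxPart p) :=
    mt Multiset.mem_of_mem_erase (maxPart_add_one_notMem p)
  rw [evenDistinct_iff_of_parts_eq_cons (p := incMaxPart p) rfl, isRaised_incMaxPart_iff,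
    evenDistinct_iff_of_parts_eq_cons (maxPart_cons_erase p).symm]
  simp only [hnotMem, not_false_eq_true, implies_true, and_true]

theorem ncard_evenDistinct_isRaised :
    {q : (m + 1).Partition | EvenDistinct q ∧ IsRaised q}.ncard =
      {p : m.Partition | EvenDistinct p}.ncard := by
  rw [← Set.ncard_preimage_of_injective_subset_range incMaxPart_injective fun q hq =>
    mem_range_incMaxPart_of_count_eq_one (hq.1.count_maxPart_eq_one hq.2)]
  simp only [Set.preimage_ofPred_eq, evenDistinct_and_isRaised_incMaxPart_iff]

end IncMaxPart

end Partition

theorem card_with_one_eq_card_without_one : ∀ n : ℕ, 2 ≤ n →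
    Nat.card {p : n.Partition // EvenDistinct p ∧ 1 ∈ p.parts ∧ Odd (maxPart p) ∧
      (2 ≤ p.parts.count (maxPart p) ∨ maxPart p - 1 ∈ p.parts)} =
    Nat.card {p : n.Partition // EvenDistinct p ∧ 1 ∉ p.parts ∧
      ((p.parts ≠ 0 ∧ Even (maxPart p)) ∨
        (Odd (maxPart p) ∧ p.parts.count (maxPart p) = 1 ∧ maxPart p - 1 ∉ p.parts))} := by
  intro n hn
  obtain ⟨m, rfl⟩ := Nat.exists_eq_add_one_of_ne_zero (by omega : n ≠ 0)
  have : NeZero m := ⟨by omega⟩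
  let withOne : Set (m + 1).Partition := {p | 1 ∈ p.parts ∧ EvenDistinct p}
  let raised : Set (m + 1).Partition := {p | EvenDistinct p ∧ IsRaised p}
  have card_eq : withOne.ncard = raised.ncard :=
    (ncard_evenDistinct_with_odd_part odd_one (Nat.le_add_left 1 m)).trans
      (ncard_evenDistinct_isRaised (m := m)).symm
  calc
    _ = (withOne \ raised).ncard := Nat.card_congr <| Equiv.subtypeEquivRight fun p => by
      rw [← not_isRaised_iff]
      simp only [withOne, raised, Set.mem_sdiff, Set.mem_ofPred_eq]
      tauto
    _ = (raised \ withOne).ncard :=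
      (Set.ncard_eq_ncard_iff_ncard_sdiff_eq_ncard_sdiff).1 card_eq
    _ = _ := Nat.card_congr <| Equiv.subtypeEquivRight fun p => by
      simp only [withOne, raised, Set.mem_sdiff, Set.mem_ofPred_eq, IsRaised]
      tauto
end
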